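/- Let P ⊆ ℝ^d be a d-dimensional simplicial reflexive polytope and F a facet of P. Then: (a) every lattice point x ∈ ∂P with ⟨u_F, x⟩ = 0 lies on a neighboring facet N(F,w) for some w ∈ 𝒱(F); (b) every vertex v ∈ H_P(F,0) is the neighboring vertex n(F,w) for some w ∈ 𝒱(F); consequently |H_P(F,0)| ≤ d. -/

import Mathlib

noncomputable section

/-- The standard inner product on `ℝ^d`. -/
def dotp {d : ℕ} (x y : Fin d → ℝ) : ℝ := ∑ i, x i * y i

/-- `x` is a point of the lattice `ℤ^d`. -/
def IsLP {d : ℕ} (x : Fin d → ℝ) : Prop := ∀ i, ∃ n : ℤ, x i = (n : ℝ)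

/-- A lattice polytope: convex hull of finitely many lattice points. -/
def IsLatticePolytope {d : ℕ} (P : Set (Fin d → ℝ)) : Prop :=
  ∃ V : Finset (Fin d → ℝ), (∀ v ∈ V, IsLP v) ∧ P = convexHull ℝ (V : Set (Fin d → ℝ))

/-- The dual polytope `P* = {x | ⟨x,y⟩ ≤ 1 ∀ y ∈ P}`. -/
def dualPolytope {d : ℕ} (P : Set (Fin d → ℝ)) : Set (Fin d → ℝ) :=
  {x | ∀ y ∈ P, dotp x y ≤ 1}

/-- `P` is a reflexive polytope: a (`d`-dimensional) lattice polytope with `0` in its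
interior whose dual is again a lattice polytope. -/
def IsReflexive {d : ℕ} (P : Set (Fin d → ℝ)) : Prop :=
  IsLatticePolytope P ∧ (0 : Fin d → ℝ) ∈ interior P ∧ IsLatticePolytope (dualPolytope P)

/-- `F` is a facet of `P` with (uniquely determined) outer normal `u`, normalized by
`⟨u, F⟩ = 1` (possible since `0` is in the interior of `P`). -/
def IsFacetNormal {d : ℕ} (P F : Set (Fin d → ℝ)) (u : Fin d → ℝ) : Prop :=
  F.Nonempty ∧ (∀ y ∈ P, dotp u y ≤ 1) ∧ F = {y ∈ P | dotp u y = 1} ∧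
    Module.finrank ℝ (vectorSpan ℝ F) = d - 1

/-- `F` is a facet of `P`. -/
def IsFacet {d : ℕ} (P F : Set (Fin d → ℝ)) : Prop := ∃ u, IsFacetNormal P F u

/-- `P` is simplicial: every facet has exactly `d` vertices. -/
def IsSimplicial {d : ℕ} (P : Set (Fin d → ℝ)) : Prop :=
  ∀ F, IsFacet P F → (Set.extremePoints ℝ F).ncard = d

/-- `F'` is the neighboring facet `N(F,w)`: a facet different from `F` containing all
vertices of `F` except `w`. -/
def NbrFacet {d : ℕ} (P F : Set (Fin d → ℝ)) (w : Fin d → ℝ) (F' : Set (Fin d → ℝ)) : Prop :=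
  IsFacet P F' ∧ F' ≠ F ∧ Set.extremePoints ℝ F \ {w} ⊆ F'

/-- `v'` is the neighboring vertex `n(F,w)`: the vertex of the neighboring facet `N(F,w)`
not contained in `F`. -/
def NbrVertex {d : ℕ} (P F : Set (Fin d → ℝ)) (w v' : Fin d → ℝ) : Prop :=
  ∃ F', NbrFacet P F w F' ∧ v' ∈ Set.extremePoints ℝ F' ∧ v' ∉ F

/-! Let `F` be a simplex facet with normal `u` and let `c_w` be the dual basis of its vertices `w`.
Tilting `u` to `u - t c_w` with the largest `t` that keeps `⟨·, P⟩ ≤ 1` gives the normal of the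
facet `N(F,w)`. A point `x ≠ 0` with `⟨u, x⟩ = 0` has coordinates with respect to the vertices of
`F` that sum to `0`, so one of them, say `⟨c_w, x⟩`, is negative, and `⟨u - t c_w, x⟩ > 0`. If `x`
is a lattice point of `P`, this number is an integer in `(0, 1]` because reflexivity makes the
facet normals integral; hence it is `1` and `x` lies on `N(F,w)`. In the simplicial case `N(F,w)`
has only one vertex outside `F`, so that `w` determines the vertex. -/

open Module Set

section LinearAlgebra

variable {ι K E : Type*} [Field K] [AddCommGroup E] [Module K E]

theorem finrank_span_eq_finrank_vectorSpan_add_one [FiniteDimensional K E] {f : Dual K E}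
    {s : Set E} (hs : s.Nonempty) (hf : ∀ x ∈ s, f x = 1) :
    finrank K (Submodule.span K s) = finrank K (vectorSpan K s) + 1 := by
  obtain ⟨p, hp⟩ := hs
  have vectorSpan_le : vectorSpan K s ≤ LinearMap.ker f := by
    rw [vectorSpan_def, Submodule.span_le]
    rintro _ ⟨x, hx, y, hy, rfl⟩
    simp [hf x hx, hf y hy]
  have p_notMem : p ∉ vectorSpan K s := fun h ↦ by simpa [hf p hp] using vectorSpan_le h
  have span_eq : Submodule.span K s = vectorSpan K s ⊔ Submodule.span K {p} := by
    refine le_antisymm (Submodule.span_le.2 fun x hx ↦ ?_) (sup_le ?_ (Submodule.span_mono ?_))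
    · rw [SetLike.mem_coe, ← sub_add_cancel x p]
      exact Submodule.add_mem_sup (vsub_mem_vectorSpan K hx hp)
        (Submodule.mem_span_singleton_self p)
    · rw [vectorSpan_def, Submodule.span_le]
      rintro _ ⟨x, hx, y, hy, rfl⟩
      exact Submodule.sub_mem _ (Submodule.subset_span hx) (Submodule.subset_span hy)
    · exact singleton_subset_iff.2 hp
  rw [span_eq, Submodule.finrank_sup_span_singleton p_notMem]

theorem finrank_vectorSpan_eq_sub_one_iff [FiniteDimensional K E] {f : Dual K E} {s : Set E}
    (hs : s.Nonempty) (hf : ∀ x ∈ s, f x = 1) :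
    finrank K (vectorSpan K s) = finrank K E - 1 ↔ Submodule.span K s = ⊤ := by
  have h_add := finrank_span_eq_finrank_vectorSpan_add_one hs hf
  have h_le := Submodule.finrank_le (Submodule.span K s)
  rw [Submodule.eq_top_iff_finrank_eq]
  omega

theorem eq_smul_coord_of_forall_ne_eq_zero (b : Basis ι K E) {f : Dual K E} {i : ι}
    (hf : ∀ j ≠ i, f (b j) = 0) : f = f (b i) • b.coord i := by
  classical
  refine b.ext fun j ↦ ?_
  rcases eq_or_ne j i with rfl | hj
  · simp
  · simp [hf j hj, hj]

theorem coord_ne_zero (b : Basis ι K E) (i : ι) : b.coord i ≠ 0 := fun h ↦ by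
  simpa using LinearMap.congr_fun h (b i)

theorem span_eq_top_of_basis_exchange (b : Basis ι K E) {s : Set E} {i : ι} {v : E}
    (hb : ∀ j ≠ i, b j ∈ s) (hv : v ∈ s) (hvi : b.coord i v ≠ 0) : Submodule.span K s = ⊤ := by
  by_contra h
  obtain ⟨f, hf, hker⟩ := Submodule.exists_le_ker_of_lt_top _ (lt_top_iff_ne_top.2 h)
  have f_eq_zero : ∀ x ∈ s, f x = 0 := fun x hx ↦ hker (Submodule.subset_span hx)
  have f_eq := eq_smul_coord_of_forall_ne_eq_zero b fun j hj ↦ f_eq_zero _ (hb j hj)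
  have f_basis : f (b i) = 0 := by
    have := f_eq_zero v hv
    rw [f_eq, LinearMap.smul_apply, smul_eq_mul] at this
    exact (mul_eq_zero.1 this).resolve_right hvi
  exact hf (by rw [f_eq, f_basis, zero_smul])

variable [LinearOrder K] [IsStrictOrderedRing K]

theorem exists_coord_neg_of_nonpos (b : Basis ι K E) {f : Dual K E} (hf : ∀ i, 0 < f (b i)) {x : E}
    (hx : x ≠ 0) (hfx : f x ≤ 0) : ∃ i, b.coord i x < 0 := by
  by_contra! hcoord
  have f_eq : f x = ∑ i ∈ (b.repr x).support, b.coord i x * f (b i) := by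
    conv_lhs => rw [← b.linearCombination_repr x]
    simp [Finsupp.linearCombination_apply, Finsupp.sum]
  refine hfx.not_gt (f_eq ▸ Finset.sum_pos (fun i hi ↦ mul_pos ?_ (hf i)) ?_)
  · exact (hcoord i).lt_of_ne' (Finsupp.mem_support_iff.1 hi)
  · simpa [Finsupp.support_nonempty_iff] using hx

theorem coord_nonneg_of_mem_convexHull_range (b : Basis ι K E) (i : ι) {x : E}
    (hx : x ∈ convexHull K (range b)) : 0 ≤ b.coord i x := by
  classical
  obtain ⟨_, ⟨j, rfl⟩, hj⟩ :=
    ((b.coord i).concaveOn convex_univ).exists_le_of_mem_convexHull (subset_univ _) hx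
  refine le_trans ?_ hj
  rcases eq_or_ne j i with rfl | hji
  · simp
  · simp [hji]

theorem exists_pos_forall_mem_convexHull_sub_smul_le {s : Set E} (hs : s.Finite) {f g : Dual K E}
    {c : K} (hf : ∀ x ∈ s, f x ≤ c) (hfg : ∀ x ∈ s, g x < 0 → f x < c) (hg : ∃ x ∈ s, g x < 0) :
    ∃ t : K, 0 < t ∧ (∀ x ∈ convexHull K s, (f - t • g) x ≤ c) ∧
      ∃ x ∈ s, g x < 0 ∧ (f - t • g) x = c := by
  -- The step `t` comes from the ratio test of the simplex method.
  obtain ⟨v, ⟨hvs, hv⟩, hmin⟩ := exists_min_image {x ∈ s | g x < 0} (fun x ↦ (f x - c) / g x)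
    (hs.subset (sep_subset _ _)) hg
  set t := (f v - c) / g v
  have t_pos : 0 < t := div_pos_of_neg_of_neg (sub_neg.2 (hfg v hvs hv)) hv
  have tilted_le : ∀ x ∈ s, (f - t • g) x ≤ c := fun x hx ↦ by
    simp only [LinearMap.sub_apply, LinearMap.smul_apply, smul_eq_mul]
    rcases lt_or_ge (g x) 0 with hgx | hgx
    · have := (le_div_iff_of_neg hgx).1 (hmin x ⟨hx, hgx⟩)
      linarith
    · linarith [hf x hx, mul_nonneg t_pos.le hgx]
  refine ⟨t, t_pos, fun x hx ↦ ?_, v, hvs, hv, ?_⟩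
  · exact convexHull_min tilted_le (convex_halfSpace_le (f - t • g).isLinear c) hx
  · simp [t, div_mul_cancel₀ _ hv.ne]

end LinearAlgebra

section Convex

variable {E : Type*} [AddCommGroup E] [Module ℝ E] [TopologicalSpace E]

theorem isExposed_setOf_eq (f : StrongDual ℝ E) {A : Set E} {c : ℝ} (hf : ∀ x ∈ A, f x ≤ c) :
    IsExposed ℝ A {x ∈ A | f x = c} := by
  rintro ⟨z, hzA, hz⟩
  refine ⟨f, ext fun x ↦ and_congr_right fun hxA ↦ ⟨fun hx y hy ↦ ?_, fun hx ↦ ?_⟩⟩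
  · exact hx ▸ hf y hy
  · exact (hf x hxA).antisymm (hz ▸ hx z hzA)

variable [ContinuousSMul ℝ E]

theorem exists_mem_apply_neg_of_zero_mem_interior {A : Set E} (hA : 0 ∈ interior A) {f : Dual ℝ E}
    (hf : f ≠ 0) : ∃ x ∈ A, f x < 0 := by
  obtain ⟨y, hy⟩ : ∃ y, f y < 0 := by
    obtain ⟨z, hz⟩ := DFunLike.ne_iff.1 hf
    rcases hz.lt_or_gt with hz | hz
    · exact ⟨z, hz⟩
    · exact ⟨-z, by simpa using hz⟩
  have smul_mem : ∀ᶠ t : ℝ in nhdsWithin 0 (Ioi 0), t • y ∈ A :=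
    ((continuous_id.smul continuous_const).tendsto' (0 : ℝ) (0 : E) (zero_smul ℝ y)
      |>.eventually (mem_interior_iff_mem_nhds.1 hA)).filter_mono nhdsWithin_le_nhds
  obtain ⟨t, htA, ht⟩ := (smul_mem.and self_mem_nhdsWithin).exists
  exact ⟨t • y, htA, by simpa using mul_neg_of_pos_of_neg ht hy⟩

theorem exists_apply_neg_of_zero_mem_interior_convexHull {s : Set E}
    (hs : 0 ∈ interior (convexHull ℝ s)) {f : Dual ℝ E} (hf : f ≠ 0) : ∃ x ∈ s, f x < 0 := by
  obtain ⟨x, hx, hfx⟩ := exists_mem_apply_neg_of_zero_mem_interior hs hf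
  obtain ⟨y, hy, hyx⟩ := (f.concaveOn convex_univ).exists_le_of_mem_convexHull (subset_univ _) hx
  exact ⟨y, hy, hyx.trans_lt hfx⟩

theorem extremePoints_subset_frontier [IsTopologicalAddGroup E] [Nontrivial E] (A : Set E) :
    A.extremePoints ℝ ⊆ frontier A := fun _ hx ↦
  ⟨subset_closure hx.1, fun hint ↦ disjoint_left.1 (disjoint_interior_extremePoints A) hint hx⟩

end Convex

section Lattice

variable {d : ℕ}

theorem dotProductEquiv_eq_dotp (x y : Fin d → ℝ) : dotProductEquiv ℝ (Fin d) x y = dotp x y := rfl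

theorem dotp_comm (x y : Fin d → ℝ) : dotp x y = dotp y x := dotProduct_comm x y

theorem IsLP.exists_dotp_eq_intCast {x y : Fin d → ℝ} (hx : IsLP x) (hy : IsLP y) :
    ∃ n : ℤ, dotp x y = n := by
  choose a ha using hx
  choose b hb using hy
  exact ⟨∑ i, a i * b i, by simp [dotp, ha, hb]⟩

theorem IsLatticePolytope.isClosed {P : Set (Fin d → ℝ)} (hP : IsLatticePolytope P) :
    IsClosed P := by
  obtain ⟨V, -, rfl⟩ := hP
  exact V.finite_toSet.isClosed_convexHull ℝ

theorem IsLatticePolytope.isLP_of_mem_extremePoints {P : Set (Fin d → ℝ)}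
    (hP : IsLatticePolytope P) {x : Fin d → ℝ} (hx : x ∈ P.extremePoints ℝ) : IsLP x := by
  obtain ⟨V, hV, rfl⟩ := hP
  exact hV x (extremePoints_convexHull_subset hx)

end Lattice

section Facet

variable {d : ℕ} {P F : Set (Fin d → ℝ)} {u : Fin d → ℝ}

/-- The face of `P` in the hyperplane `⟨u, ·⟩ = 1`; it is meant for `u` in the dual polytope of `P`,
where this hyperplane supports `P`. -/
def face (P : Set (Fin d → ℝ)) (u : Fin d → ℝ) : Set (Fin d → ℝ) := {y ∈ P | dotp u y = 1}

theorem isExposed_face (hu : ∀ y ∈ P, dotp u y ≤ 1) : IsExposed ℝ P (face P u) :=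
  isExposed_setOf_eq (dotProductEquiv ℝ (Fin d) u).toContinuousLinearMap hu

theorem isFacetNormal_face_iff (hu : ∀ y ∈ P, dotp u y ≤ 1) (hne : (face P u).Nonempty) :
    IsFacetNormal P (face P u) u ↔ Submodule.span ℝ (face P u) = ⊤ := by
  rw [← finrank_vectorSpan_eq_sub_one_iff (f := dotProductEquiv ℝ (Fin d) u) hne fun _ hx ↦ hx.2,
    finrank_fin_fun]
  exact ⟨fun h ↦ h.2.2.2, fun h ↦ ⟨hne, hu, rfl, h⟩⟩

namespace IsFacetNormal

theorem eq_face (hF : IsFacetNormal P F u) : F = face P u := hF.2.2.1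

theorem dotp_le_one (hF : IsFacetNormal P F u) {y : Fin d → ℝ} (hy : y ∈ P) : dotp u y ≤ 1 :=
  hF.2.1 y hy

theorem dotp_eq_one (hF : IsFacetNormal P F u) {y : Fin d → ℝ} (hy : y ∈ F) : dotp u y = 1 :=
  (hF.eq_face.subset hy).2

theorem isExposed (hF : IsFacetNormal P F u) : IsExposed ℝ P F :=
  hF.eq_face ▸ isExposed_face hF.2.1

theorem span_eq_top (hF : IsFacetNormal P F u) : Submodule.span ℝ F = ⊤ := by
  obtain rfl := hF.eq_face
  exact (isFacetNormal_face_iff hF.2.1 hF.1).1 hF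

theorem eq_of_forall_dotp_eq (hF : IsFacetNormal P F u) {p q : Fin d → ℝ}
    (hpq : ∀ y ∈ F, dotp p y = dotp q y) : p = q :=
  (dotProductEquiv ℝ (Fin d)).injective (LinearMap.ext_on hF.span_eq_top hpq)

theorem mem_extremePoints_dualPolytope (hF : IsFacetNormal P F u) :
    u ∈ (dualPolytope P).extremePoints ℝ := by
  have singleton_eq : {u} = ⋂ y : F, face (dualPolytope P) y := by
    ext p
    simp only [mem_singleton_iff, mem_iInter, Subtype.forall]
    refine ⟨?_, fun hp ↦ hF.eq_of_forall_dotp_eq fun y hy ↦ ?_⟩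
    · rintro rfl y hy
      exact ⟨hF.2.1, dotp_comm y p ▸ hF.dotp_eq_one hy⟩
    · rw [dotp_comm, (hp y hy).2, hF.dotp_eq_one hy]
  have := hF.1.to_subtype
  rw [← isExtreme_singleton, singleton_eq]
  refine isExtreme_iInter fun y ↦ (isExposed_face fun p hp ↦ ?_).isExtreme
  exact dotp_comm p y ▸ hp y (hF.isExposed.subset y.2)

theorem isLP (hF : IsFacetNormal P F u) (hdual : IsLatticePolytope (dualPolytope P)) : IsLP u :=
  hdual.isLP_of_mem_extremePoints hF.mem_extremePoints_dualPolytope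

theorem finite_extremePoints {V : Set (Fin d → ℝ)} (hV : V.Finite)
    (hF : IsFacetNormal (convexHull ℝ V) F u) : (F.extremePoints ℝ).Finite :=
  hV.subset <| hF.isExposed.isExtreme.extremePoints_subset_extremePoints.trans
    extremePoints_convexHull_subset

theorem convexHull_extremePoints {V : Set (Fin d → ℝ)} (hV : V.Finite)
    (hF : IsFacetNormal (convexHull ℝ V) F u) : convexHull ℝ (F.extremePoints ℝ) = F := by
  rw [← ((hF.finite_extremePoints hV).isClosed_convexHull ℝ).closure_eq]
  exact closure_convexHull_extremePoints (hF.isExposed.isCompact (hV.isCompact_convexHull ℝ))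
    (hF.isExposed.convex (convex_convexHull ℝ V))

theorem exists_basis_eq_extremePoints {V : Set (Fin d → ℝ)} (hV : V.Finite)
    (hF : IsFacetNormal (convexHull ℝ V) F u) (hcard : (F.extremePoints ℝ).ncard = d) :
    ∃ b : Basis (F.extremePoints ℝ) ℝ (Fin d → ℝ), ⇑b = Subtype.val := by
  have := (hF.finite_extremePoints hV).fintype
  have span_eq : ⊤ ≤ Submodule.span ℝ (range (Subtype.val : F.extremePoints ℝ → Fin d → ℝ)) := by
    rw [Subtype.range_coe, ← hF.span_eq_top, Submodule.span_le]
    conv_lhs => rw [← hF.convexHull_extremePoints hV]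
    exact convexHull_min Submodule.subset_span (Submodule.convex _)
  have card_eq : Fintype.card (F.extremePoints ℝ) = finrank ℝ (Fin d → ℝ) := by
    rw [finrank_fin_fun, ← Nat.card_eq_fintype_card, Nat.card_coe_set_eq, hcard]
  exact ⟨basisOfTopLeSpanOfCardEqFinrank _ span_eq card_eq,
    coe_basisOfTopLeSpanOfCardEqFinrank _ span_eq card_eq⟩

end IsFacetNormal

end Facet

section NeighboringFacet

variable {d : ℕ} {P F F' : Set (Fin d → ℝ)} {u : Fin d → ℝ}

/-- The vector representing the coordinate functional `b.coord i` through the standard inner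
product, that is, a member of the basis dual to `b`. -/
def coordVec {ι : Type*} (b : Basis ι ℝ (Fin d → ℝ)) (i : ι) : Fin d → ℝ :=
  (dotProductEquiv ℝ (Fin d)).symm (b.coord i)

theorem dotp_coordVec {ι : Type*} (b : Basis ι ℝ (Fin d → ℝ)) (i : ι) (y : Fin d → ℝ) :
    dotp (coordVec b i) y = b.coord i y := by
  rw [← dotProductEquiv_eq_dotp, coordVec, LinearEquiv.apply_symm_apply]

theorem dotp_sub_smul (u c : Fin d → ℝ) (t : ℝ) (y : Fin d → ℝ) :
    dotp (u - t • c) y = dotp u y - t * dotp c y := by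
  simp [← dotProductEquiv_eq_dotp]

namespace IsFacetNormal

theorem tilt_coeff_le {c : Fin d → ℝ} {s t : ℝ} (hu : ∀ y ∈ P, dotp u y ≤ 1) (hc : c ≠ 0)
    (hs : 0 < s) (hF : IsFacetNormal P F (u - s • c)) (ht : ∀ y ∈ P, dotp (u - t • c) y ≤ 1) :
    t ≤ s := by
  obtain ⟨y, hyF, hy⟩ : ∃ y ∈ F, dotp c y ≠ 0 := by
    by_contra! h
    exact hc (hF.eq_of_forall_dotp_eq fun y hy ↦ (h y hy).trans (zero_dotProduct y).symm)
  have hyP := hF.isExposed.subset hyF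
  have h_one := hF.dotp_eq_one hyF
  have h_le := ht y hyP
  rw [dotp_sub_smul] at h_one h_le
  have c_neg : dotp c y < 0 := by
    refine lt_of_le_of_ne (nonpos_of_mul_nonpos_right ?_ hs) hy
    linarith [hu y hyP]
  exact le_of_sub_nonpos (nonpos_of_mul_nonneg_left (by linarith) c_neg)

variable (b : Basis (F.extremePoints ℝ) ℝ (Fin d → ℝ))

theorem dotp_tilt_eq_one (hF : IsFacetNormal P F u) (hb : ⇑b = Subtype.val)
    {w e : F.extremePoints ℝ} (hew : e ≠ w) (t : ℝ) : dotp (u - t • coordVec b w) e = 1 := by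
  have coord_eq : b.coord w e = 0 := by
    rw [← congrFun hb e]
    simp [hew]
  rw [dotp_sub_smul, dotp_coordVec, coord_eq, mul_zero, sub_zero, hF.dotp_eq_one e.2.1]

theorem nbrFacet_iff_exists_tilt (hF : IsFacetNormal P F u) (hb : ⇑b = Subtype.val)
    (w : F.extremePoints ℝ) :
    NbrFacet P F w F' ↔ ∃ t : ℝ, 0 < t ∧ IsFacetNormal P F' (u - t • coordVec b w) := by
  constructor
  · rintro ⟨⟨u', hF'⟩, hne, hsub⟩
    set g := dotProductEquiv ℝ (Fin d) (u - u')
    have g_apply (y) : g y = dotp u y - dotp u' y := by simp [g, ← dotProductEquiv_eq_dotp]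
    have g_eq : g = g w • b.coord w := by
      rw [← congrFun hb w]
      refine eq_smul_coord_of_forall_ne_eq_zero b fun e hew ↦ ?_
      rw [hb, g_apply, hF.dotp_eq_one e.2.1,
        hF'.dotp_eq_one (hsub ⟨e.2, Subtype.coe_ne_coe.2 hew⟩), sub_self]
    have u'_eq : u' = u - g w • coordVec b w := by
      rw [coordVec, ← map_smul, ← g_eq, LinearEquiv.symm_apply_apply, sub_sub_cancel]
    have g_nonneg : 0 ≤ g w := by
      rw [g_apply, hF.dotp_eq_one w.2.1, sub_nonneg]
      exact hF'.dotp_le_one (hF.isExposed.subset w.2.1)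
    have g_ne_zero : g w ≠ 0 := fun h ↦ hne <| by
      rw [hF'.eq_face, hF.eq_face, u'_eq, h, zero_smul, sub_zero]
    exact ⟨g w, g_nonneg.lt_of_ne' g_ne_zero, u'_eq ▸ hF'⟩
  · rintro ⟨t, ht, hF'⟩
    refine ⟨⟨_, hF'⟩, ?_, fun e ⟨he, hew⟩ ↦ hF'.eq_face ▸ ⟨hF.isExposed.subset he.1, ?_⟩⟩
    · rintro rfl
      have coord_self : b.coord w w = 1 := by
        rw [← congrFun hb w]
        simp
      have := hF'.dotp_eq_one w.2.1
      rw [dotp_sub_smul, dotp_coordVec, coord_self, hF.dotp_eq_one w.2.1] at this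
      linarith
    · exact hF.dotp_tilt_eq_one b hb (e := ⟨e, he⟩) (fun h ↦ hew (congrArg Subtype.val h)) t

theorem exists_tilt {V : Set (Fin d → ℝ)} (hV : V.Finite)
    (h0 : 0 ∈ interior (convexHull ℝ V)) (hF : IsFacetNormal (convexHull ℝ V) F u)
    (hb : ⇑b = Subtype.val) (w : F.extremePoints ℝ) :
    ∃ t : ℝ, 0 < t ∧ IsFacetNormal (convexHull ℝ V) (face (convexHull ℝ V) (u - t • coordVec b w))
      (u - t • coordVec b w) := by
  have coord_neg : ∃ v ∈ V, b.coord w v < 0 :=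
    exists_apply_neg_of_zero_mem_interior_convexHull h0 (coord_ne_zero b w)
  have dotp_lt_one : ∀ v ∈ V, b.coord w v < 0 → dotp u v < 1 := fun v hv hneg ↦ by
    refine (hF.dotp_le_one (subset_convexHull ℝ V hv)).lt_of_ne fun h ↦ hneg.not_ge ?_
    refine coord_nonneg_of_mem_convexHull_range b w ?_
    rw [hb, Subtype.range_coe, hF.convexHull_extremePoints hV, hF.eq_face]
    exact ⟨subset_convexHull ℝ V hv, h⟩
  obtain ⟨t, ht, hle, v, hvV, hv_neg, hv_eq⟩ :=
    exists_pos_forall_mem_convexHull_sub_smul_le (f := dotProductEquiv ℝ (Fin d) u) hV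
      (fun v hv ↦ hF.dotp_le_one (subset_convexHull ℝ V hv)) dotp_lt_one coord_neg
  have tilt_eq : dotProductEquiv ℝ (Fin d) u - t • b.coord w =
      dotProductEquiv ℝ (Fin d) (u - t • coordVec b w) := by simp [coordVec]
  rw [tilt_eq] at hle hv_eq
  have v_mem : v ∈ face (convexHull ℝ V) (u - t • coordVec b w) :=
    ⟨subset_convexHull ℝ V hvV, hv_eq⟩
  refine ⟨t, ht, (isFacetNormal_face_iff hle ⟨v, v_mem⟩).2 ?_⟩
  refine span_eq_top_of_basis_exchange b (fun e hew ↦ ?_) v_mem hv_neg.ne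
  rw [hb]
  exact ⟨hF.isExposed.subset e.2.1, hF.dotp_tilt_eq_one b hb hew t⟩

theorem nbrFacet_unique {V : Set (Fin d → ℝ)} (hV : V.Finite) {F₁ F₂ : Set (Fin d → ℝ)}
    (hF : IsFacetNormal (convexHull ℝ V) F u) (hcard : (F.extremePoints ℝ).ncard = d)
    {w : Fin d → ℝ} (hw : w ∈ F.extremePoints ℝ) (h₁ : NbrFacet (convexHull ℝ V) F w F₁)
    (h₂ : NbrFacet (convexHull ℝ V) F w F₂) : F₁ = F₂ := by
  obtain ⟨b, hb⟩ := hF.exists_basis_eq_extremePoints hV hcard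
  obtain ⟨t₁, ht₁, hF₁⟩ := (hF.nbrFacet_iff_exists_tilt b hb ⟨w, hw⟩).1 h₁
  obtain ⟨t₂, ht₂, hF₂⟩ := (hF.nbrFacet_iff_exists_tilt b hb ⟨w, hw⟩).1 h₂
  have coordVec_ne_zero : coordVec b ⟨w, hw⟩ ≠ 0 := by
    simpa [coordVec] using coord_ne_zero b ⟨w, hw⟩
  obtain rfl : t₁ = t₂ := le_antisymm (tilt_coeff_le hF.2.1 coordVec_ne_zero ht₂ hF₂ hF₁.2.1)
    (tilt_coeff_le hF.2.1 coordVec_ne_zero ht₁ hF₁ hF₂.2.1)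
  rw [hF₁.eq_face, hF₂.eq_face]

theorem nbrVertex_unique {V : Set (Fin d → ℝ)} (hV : V.Finite) (hs : IsSimplicial (convexHull ℝ V))
    (hF : IsFacetNormal (convexHull ℝ V) F u) {w v₁ v₂ : Fin d → ℝ} (hw : w ∈ F.extremePoints ℝ)
    (h₁ : NbrVertex (convexHull ℝ V) F w v₁) (h₂ : NbrVertex (convexHull ℝ V) F w v₂) :
    v₁ = v₂ := by
  obtain ⟨F', h, hv₁, hv₁F⟩ := h₁
  obtain ⟨F'', h'', hv₂, hv₂F⟩ := h₂
  have hcard := hs F ⟨u, hF⟩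
  obtain rfl := hF.nbrFacet_unique hV hcard hw h'' h
  obtain ⟨u', hF'⟩ := h.1
  have finite := hF'.finite_extremePoints hV
  have common_subset : F.extremePoints ℝ \ {w} ⊆ F''.extremePoints ℝ := fun e he ↦
    inter_extremePoints_subset_extremePoints_of_subset hF'.isExposed.subset
      ⟨h.2.2 he, hF.isExposed.isExtreme.extremePoints_subset_extremePoints he.1⟩
  have ncard_le_one : (F''.extremePoints ℝ \ (F.extremePoints ℝ \ {w})).ncard ≤ 1 := by
    rw [ncard_sdiff common_subset (finite.subset common_subset), ncard_sdiff_singleton_of_mem hw,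
      hcard, hs F'' h.1]
    omega
  exact (ncard_le_one_iff finite.sdiff).1 ncard_le_one ⟨hv₁, fun hv ↦ hv₁F hv.1.1⟩
    ⟨hv₂, fun hv ↦ hv₂F hv.1.1⟩

end IsFacetNormal

end NeighboringFacet

section Reflexive

variable {d : ℕ} {P F : Set (Fin d → ℝ)} {u : Fin d → ℝ}

theorem mem_face_of_dotp_pos {x : Fin d → ℝ} (hu : ∀ y ∈ P, dotp u y ≤ 1) (hu_int : IsLP u)
    (hx : IsLP x) (hxP : x ∈ P) (hpos : 0 < dotp u x) : x ∈ face P u := by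
  obtain ⟨n, hn⟩ := hu_int.exists_dotp_eq_intCast hx
  have hle := hu x hxP
  refine ⟨hxP, ?_⟩
  rw [hn] at hpos hle ⊢
  norm_cast at hpos hle ⊢
  omega

namespace IsReflexive

theorem exists_nbrFacet_mem (hP : IsReflexive P) (hF : IsFacetNormal P F u)
    (hcard : (F.extremePoints ℝ).ncard = d) {x : Fin d → ℝ} (hx : IsLP x) (hxP : x ∈ frontier P)
    (hux : dotp u x = 0) : ∃ w ∈ F.extremePoints ℝ, ∃ F', NbrFacet P F w F' ∧ x ∈ F' := by
  have x_mem : x ∈ P := hP.1.isClosed.frontier_subset hxP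
  obtain ⟨⟨V, -, rfl⟩, h0, hdual⟩ := hP
  have x_ne_zero : x ≠ 0 := by
    rintro rfl
    exact hxP.2 h0
  obtain ⟨b, hb⟩ := hF.exists_basis_eq_extremePoints V.finite_toSet hcard
  obtain ⟨w, hw⟩ : ∃ w, b.coord w x < 0 := by
    refine exists_coord_neg_of_nonpos b (f := dotProductEquiv ℝ (Fin d) u) (fun e ↦ ?_) x_ne_zero
      hux.le
    rw [hb, dotProductEquiv_eq_dotp, hF.dotp_eq_one e.2.1]
    exact one_pos
  obtain ⟨t, ht, hF'⟩ := hF.exists_tilt b V.finite_toSet h0 hb w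
  refine ⟨w, w.2, _, (hF.nbrFacet_iff_exists_tilt b hb w).2 ⟨t, ht, hF'⟩,
    mem_face_of_dotp_pos hF'.2.1 (hF'.isLP hdual) hx x_mem ?_⟩
  rw [dotp_sub_smul, hux, dotp_coordVec, zero_sub]
  exact neg_pos.2 (mul_neg_of_pos_of_neg ht hw)

theorem exists_nbrVertex (hP : IsReflexive P) (hF : IsFacetNormal P F u)
    (hcard : (F.extremePoints ℝ).ncard = d) {v : Fin d → ℝ} (hv : v ∈ P.extremePoints ℝ)
    (huv : dotp u v = 0) : ∃ w ∈ F.extremePoints ℝ, NbrVertex P F w v := by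
  have nontrivial : Nontrivial (Fin d → ℝ) := by
    obtain ⟨y, hy⟩ := hF.1
    refine ⟨y, v, ?_⟩
    rintro rfl
    exact zero_ne_one (huv.symm.trans (hF.dotp_eq_one hy))
  obtain ⟨w, hw, F', hNbr, hvF'⟩ := hP.exists_nbrFacet_mem hF hcard
    (hP.1.isLP_of_mem_extremePoints hv) (extremePoints_subset_frontier P hv) huv
  obtain ⟨u', hF'⟩ := hNbr.1
  refine ⟨w, hw, F', hNbr, ?_, fun hvF ↦ ?_⟩
  · exact inter_extremePoints_subset_extremePoints_of_subset hF'.isExposed.subset ⟨hvF', hv⟩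
  · exact zero_ne_one (huv.symm.trans (hF.dotp_eq_one hvF))

theorem ncard_vertices_dotp_eq_zero_le (hP : IsReflexive P) (hs : IsSimplicial P)
    (hF : IsFacetNormal P F u) : {v ∈ P.extremePoints ℝ | dotp u v = 0}.ncard ≤ d := by
  have hcard := hs F ⟨u, hF⟩
  choose! w hw hwv using fun v (hv : v ∈ P.extremePoints ℝ ∧ dotp u v = 0) ↦
    hP.exists_nbrVertex hF hcard hv.1 hv.2
  obtain ⟨⟨V, -, rfl⟩, -, -⟩ := hP
  have w_injOn : InjOn w {v ∈ (convexHull ℝ (V : Set (Fin d → ℝ))).extremePoints ℝ |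
      dotp u v = 0} := fun v hv v' hv' h ↦
    hF.nbrVertex_unique V.finite_toSet hs (hw v hv) (hwv v hv) (h ▸ hwv v' hv')
  exact (ncard_le_ncard_of_injOn w hw w_injOn (hF.finite_extremePoints V.finite_toSet)).trans
    hcard.le

end IsReflexive

end Reflexive

/-- (a) every lattice point of `∂P` on the hyperplane `H(F,0)` lies on a
neighboring facet of `F`; (b) every vertex in `H_P(F,0)` is a neighboring vertex of `F`;
consequently `|H_P(F,0)| ≤ d`. -/
theorem stmt10 {d : ℕ} (P : Set (Fin d → ℝ)) (hP : IsReflexive P) (hs : IsSimplicial P)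
    (F : Set (Fin d → ℝ)) (u : Fin d → ℝ) (hF : IsFacetNormal P F u) :
    (∀ x : Fin d → ℝ, IsLP x → x ∈ frontier P → dotp u x = 0 →
      ∃ w ∈ Set.extremePoints ℝ F, ∃ F', NbrFacet P F w F' ∧ x ∈ F') ∧
    (∀ v ∈ Set.extremePoints ℝ P, dotp u v = 0 →
      ∃ w ∈ Set.extremePoints ℝ F, NbrVertex P F w v) ∧
    {v ∈ Set.extremePoints ℝ P | dotp u v = 0}.ncard ≤ d :=
  ⟨fun _ ↦ hP.exists_nbrFacet_mem hF (hs F ⟨u, hF⟩),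
    fun _ ↦ hP.exists_nbrVertex hF (hs F ⟨u, hF⟩),
    hP.ncard_vertices_dotp_eq_zero_le hs hF⟩
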